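/- Fix κ_1 and κ_2 with β < κ_1 < κ_2. There exist functions f^(1), f^(2) ∈ C²(Ω) such that: (i) (−x_1 + x_2 − β/√n)·f^(1)_1(x) − x_2·f^(1)_2(x) = −φ^{(κ_1/√n, κ_2/√n)}(−x_1) for all x ∈ Ω and f^(1)_1(0, x_2) = f^(1)_2(0, x_2) for all x_2 ≥ 0; (ii) (−x_1 + x_2 − β/√n)·f^(2)_1(x) − x_2·f^(2)_2(x) = −φ^{(κ_1/√n, κ_2/√n)}(x_2) for all x ∈ Ω and f^(2)_1(0, x_2) = f^(2)_2(0, x_2) for all x_2 ≥ 0; (iii) f^(1)(x) ≤ log((κ_2 − β)/(κ_1 − β)) and f^(2)(x) ≤ log(κ_2/κ_1) + (κ_2 − κ_1)/β for all x ∈ [−κ_2/√n, 0] × [0, κ_2/√n]; and (iv) for all x ∈ Ω: |f^(1)_1(x)| ≤ (4√n/(κ_2 − κ_1))·log((κ_2 − β)/(κ_1 − β)), |f^(1)_{11}(x)| ≤ (12n/(κ_2 − κ_1)²)·log((κ_2 − β)/(κ_1 − β)), |f^(2)_1(x)| ≤ √n/β, and |f^(2)_{11}(x)| ≤ (n/(β(κ_1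 − β)))·(1 + (κ_1/(κ_1 − β))·(4(κ_1 − β)/(κ_2 − κ_1))). -/

import Mathlib

/-- The smoothed indicator `φ^{(ℓ,u)}`. -/
noncomputable def phiSm (l u x : ℝ) : ℝ :=
  if x ≤ l then 0
  else if x ≤ (u + l) / 2 then
    (x - l) ^ 2 * (-(x - l) / (((u + l) / 2 - l) ^ 2 * (u - l)) +
      2 / (((u + l) / 2 - l) * (u - l)))
  else if x ≤ u then
    1 - (x - u) ^ 2 * ((x - u) / (((u + l) / 2 - u) ^ 2 * (u - l)) -
      2 / (((u + l) / 2 - u) * (u - l)))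
  else 1


noncomputable section

def ppos (x : ℝ) : ℝ := max x 0
def stp (x : ℝ) : ℝ := if 0 ≤ x then 1 else 0

lemma ppos_of_nonneg {x : ℝ} (h : 0 ≤ x) : ppos x = x := max_eq_left h
lemma ppos_of_nonpos {x : ℝ} (h : x ≤ 0) : ppos x = 0 := max_eq_right h
lemma stp_of_nonneg {x : ℝ} (h : 0 ≤ x) : stp x = 1 := if_pos h
lemma stp_of_neg {x : ℝ} (h : x < 0) : stp x = 0 := if_neg (not_le.mpr h)
lemma ppos_continuous : Continuous ppos := continuous_id.max continuous_const

lemma ppos_right (x : ℝ) : HasDerivWithinAt ppos (stp x) (Set.Ici x) x := by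
  rcases le_or_gt 0 x with h | h
  · rw [stp_of_nonneg h]
    exact (hasDerivWithinAt_id x _).congr
      (fun y hy => ppos_of_nonneg (h.trans hy)) (ppos_of_nonneg h)
  · rw [stp_of_neg h]
    refine HasDerivAt.hasDerivWithinAt ((hasDerivAt_const x (0:ℝ)).congr_of_eventuallyEq ?_)
    filter_upwards [Iio_mem_nhds h] with y hy
    exact ppos_of_nonpos (le_of_lt hy)

lemma ppos_deriv {x : ℝ} (hx : x ≠ 0) : HasDerivAt ppos (stp x) x := by
  rcases lt_or_gt_of_ne hx with h | h
  · rw [stp_of_neg h]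
    refine (hasDerivAt_const x (0:ℝ)).congr_of_eventuallyEq ?_
    filter_upwards [Iio_mem_nhds h] with y hy
    exact ppos_of_nonpos (le_of_lt hy)
  · rw [stp_of_nonneg h.le]
    refine (hasDerivAt_id x).congr_of_eventuallyEq ?_
    filter_upwards [Ioi_mem_nhds h] with y hy
    exact ppos_of_nonneg (le_of_lt hy)

lemma ppos_pow_deriv (x : ℝ) (k : ℕ) :
    HasDerivAt (fun y => ppos y ^ (k + 2)) ((k + 2) * ppos x ^ (k + 1)) x := by
  rcases eq_or_ne x 0 with rfl | h
  · have h0 : ppos 0 = 0 := ppos_of_nonneg le_rfl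
    rw [h0]
    have : HasDerivAt (fun y : ℝ => y ^ (k+2)) (((k+2 : ℕ) : ℝ) * 0 ^ (k+1)) 0 := hasDerivAt_pow (k+2) 0
    rw [hasDerivAt_iff_isLittleO] at this ⊢
    refine Asymptotics.IsLittleO.of_norm_left ?_
    have h2 := this.norm_left
    refine Asymptotics.IsBigO.trans_isLittleO (Asymptotics.isBigO_of_le _ ?_) h2
    intro y
    simp only [h0]
    simp
    rcases le_total 0 y with hy | hy
    · rw [ppos_of_nonneg hy]
    · rw [ppos_of_nonpos hy]; simp
  · have := (ppos_deriv h).pow (k+2)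
    refine HasDerivAt.congr_deriv this ?_
    rcases lt_or_gt_of_ne h with h | h
    · rw [ppos_of_nonpos h.le]; simp
    · rw [stp_of_nonneg h.le]; push_cast; simp

def phi1 (l u x : ℝ) : ℝ :=
  2 * (ppos (x - l) + ppos (x - (u + l) / 2) + ppos (x - u)) / ((u - l) / 2) ^ 2
    + 3 * (ppos (x - u) ^ 2 - ppos (x - l) ^ 2) / (2 * ((u - l) / 2) ^ 3)

def phi2 (l u x : ℝ) : ℝ :=
  2 * (stp (x - l) + stp (x - (u + l) / 2) + stp (x - u)) / ((u - l) / 2) ^ 2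
    + 3 * (ppos (x - u) - ppos (x - l)) / ((u - l) / 2) ^ 3

lemma phiSm_eq {l u : ℝ} (hlu : l < u) (x : ℝ) : phiSm l u x =
    (ppos (x - l) ^ 2 + ppos (x - (u + l) / 2) ^ 2 + ppos (x - u) ^ 2) / ((u - l) / 2) ^ 2
    + (ppos (x - u) ^ 3 - ppos (x - l) ^ 3) / (2 * ((u - l) / 2) ^ 3) := by
  have hd : u - l ≠ 0 := by linarith
  have e1 : (u + l) / 2 - l = (u - l) / 2 := by ring
  have e2 : (u + l) / 2 - u = -((u - l) / 2) := by ring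
  unfold phiSm
  rw [e1, e2]
  split_ifs with h1 h2 h3
  · rw [ppos_of_nonpos (by linarith : x - l ≤ 0), ppos_of_nonpos (by linarith : x - (u + l) / 2 ≤ 0),
      ppos_of_nonpos (by linarith : x - u ≤ 0)]; simp
  · rw [ppos_of_nonneg (by linarith : 0 ≤ x - l), ppos_of_nonpos (by linarith : x - (u + l) / 2 ≤ 0),
      ppos_of_nonpos (by linarith : x - u ≤ 0)]
    field_simp; ring
  · rw [ppos_of_nonneg (by linarith : 0 ≤ x - l), ppos_of_nonneg (by linarith : 0 ≤ x - (u + l) / 2),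
      ppos_of_nonpos (by linarith : x - u ≤ 0)]
    field_simp; ring
  · rw [ppos_of_nonneg (by linarith : 0 ≤ x - l), ppos_of_nonneg (by linarith : 0 ≤ x - (u + l) / 2),
      ppos_of_nonneg (by linarith : 0 ≤ x - u)]
    field_simp; ring

lemma phiSm_deriv {l u : ℝ} (hlu : l < u) (x : ℝ) : HasDerivAt (phiSm l u) (phi1 l u x) x := by
  have h2 : ∀ c, HasDerivAt (fun y => ppos (y - c) ^ 2) (2 * ppos (x - c)) x := fun c => by
    have := (ppos_pow_deriv (x - c) 0).comp x ((hasDerivAt_id x).sub_const c)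
    simpa [Function.comp_def] using this
  have h3 : ∀ c, HasDerivAt (fun y => ppos (y - c) ^ 3) (3 * ppos (x - c) ^ 2) x := fun c => by
    have := (ppos_pow_deriv (x - c) 1).comp x ((hasDerivAt_id x).sub_const c)
    refine HasDerivAt.congr_deriv this ?_
    norm_num
  have := ((((h2 l).add (h2 ((u+l)/2))).add (h2 u)).div_const (((u - l) / 2) ^ 2)).add
    (((h3 u).sub (h3 l)).div_const (2 * ((u - l) / 2) ^ 3))
  have e : phiSm l u = _ := funext (phiSm_eq hlu)
  rw [e]
  refine HasDerivAt.congr_deriv this ?_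
  unfold phi1; ring

lemma phi1_continuous (l u : ℝ) : Continuous (phi1 l u) := by
  have := ppos_continuous
  unfold phi1
  fun_prop

lemma phi1_right (l u x : ℝ) : HasDerivWithinAt (phi1 l u) (phi2 l u x) (Set.Ici x) x := by
  have h1 : ∀ c, HasDerivWithinAt (fun y => ppos (y - c)) (stp (x - c)) (Set.Ici x) x := fun c => by
    have := (ppos_right (x - c)).comp (h := fun y => y - c) x
      ((hasDerivWithinAt_id x (Set.Ici x)).sub_const c)
      (fun y hy => by simpa using hy)
    simpa [Function.comp_def] using this
  have h2 : ∀ c, HasDerivWithinAt (fun y => ppos (y - c) ^ 2) (2 * ppos (x - c)) (Set.Ici x) x :=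
    fun c => by
    have := (ppos_pow_deriv (x - c) 0).comp x ((hasDerivAt_id x).sub_const c)
    exact HasDerivAt.hasDerivWithinAt (by simpa [Function.comp_def] using this)
  have := (((((h1 l).add (h1 ((u+l)/2))).add (h1 u)).const_mul 2).div_const (((u - l) / 2) ^ 2)).add
    ((((h2 u).sub (h2 l)).const_mul 3).div_const (2 * ((u - l) / 2) ^ 3))
  refine HasDerivWithinAt.congr_deriv this ?_
  unfold phi2
  rcases eq_or_ne (u - l) 0 with h | h
  · simp [h]
  · field_simp

lemma phi1_deriv (l u : ℝ) {x : ℝ} (h1 : x ≠ l) (h2 : x ≠ (u + l) / 2) (h3 : x ≠ u) :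
    HasDerivAt (phi1 l u) (phi2 l u x) x := by
  have h1 : ∀ c, x ≠ c → HasDerivAt (fun y => ppos (y - c)) (stp (x - c)) x := fun c hc => by
    have := (ppos_deriv (sub_ne_zero.2 hc)).comp x
      ((hasDerivAt_id x).sub_const c)
    simpa [Function.comp_def] using this
  have h2 : ∀ c, HasDerivAt (fun y => ppos (y - c) ^ 2) (2 * ppos (x - c)) x :=
    fun c => by
    have := (ppos_pow_deriv (x - c) 0).comp x ((hasDerivAt_id x).sub_const c)
    simpa [Function.comp_def] using this
  have := (((((h1 l ‹_›).add (h1 ((u+l)/2) ‹_›)).add (h1 u ‹_›)).const_mul 2).div_const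
    (((u - l) / 2) ^ 2)).add
    ((((h2 u).sub (h2 l)).const_mul 3).div_const (2 * ((u - l) / 2) ^ 3))
  refine HasDerivAt.congr_deriv this ?_
  unfold phi2
  rcases eq_or_ne (u - l) 0 with h | h
  · simp [h]
  · field_simp

lemma stp_contAt {x : ℝ} (hx : x ≠ 0) : ContinuousAt stp x := by
  rcases lt_or_gt_of_ne hx with h | h
  · refine (continuousAt_const (y := (0:ℝ))).congr ?_
    filter_upwards [Iio_mem_nhds h] with y hy
    exact (stp_of_neg hy).symm
  · refine (continuousAt_const (y := (1:ℝ))).congr ?_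
    filter_upwards [Ioi_mem_nhds h] with y hy
    exact (stp_of_nonneg (le_of_lt hy)).symm

lemma phi2_contAt (l u : ℝ) {x : ℝ} (h1 : x ≠ l) (h2 : x ≠ (u + l) / 2) (h3 : x ≠ u) :
    ContinuousAt (phi2 l u) x := by
  have h : ∀ c, x ≠ c → ContinuousAt (fun y => stp (y - c)) x := fun c hc =>
    ContinuousAt.comp (f := fun y => y - c) (stp_contAt (sub_ne_zero.2 hc)) (by fun_prop)
  have a1 := h l h1
  have a2 := h _ h2
  have a3 := h u h3
  have := ppos_continuous
  unfold phi2
  fun_prop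

lemma stp_measurable : Measurable stp :=
  Measurable.ite measurableSet_Ici measurable_const measurable_const

lemma phi2_measurable (l u : ℝ) : Measurable (phi2 l u) := by
  have := ppos_continuous.measurable
  have := stp_measurable
  unfold phi2
  fun_prop

lemma phi1_zero_left {l u x : ℝ} (hlu : l < u) (h : x ≤ l) : phi1 l u x = 0 := by
  unfold phi1
  rw [ppos_of_nonpos (by linarith : x - l ≤ 0), ppos_of_nonpos (by linarith : x - (u + l) / 2 ≤ 0),
      ppos_of_nonpos (by linarith : x - u ≤ 0)]; simp
lemma phi2_zero_left {l u x : ℝ} (hlu : l < u) (h : x < l) : phi2 l u x = 0 := by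
  unfold phi2
  rw [ppos_of_nonpos (by linarith : x - l ≤ 0), stp_of_neg (by linarith : x - (u + l) / 2 < 0),
      ppos_of_nonpos (by linarith : x - u ≤ 0), stp_of_neg (by linarith : x - l < 0),
      stp_of_neg (by linarith : x - u < 0)]; simp
lemma phi1_zero_right {l u x : ℝ} (hlu : l < u) (h : u ≤ x) : phi1 l u x = 0 := by
  have hd : u - l ≠ 0 := by linarith
  unfold phi1
  rw [ppos_of_nonneg (by linarith : 0 ≤ x - l), ppos_of_nonneg (by linarith : 0 ≤ x - (u + l) / 2),
      ppos_of_nonneg (by linarith : 0 ≤ x - u)]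
  field_simp; ring
lemma phi2_zero_right {l u x : ℝ} (hlu : l < u) (h : u ≤ x) : phi2 l u x = 0 := by
  have hd : u - l ≠ 0 := by linarith
  unfold phi2
  rw [ppos_of_nonneg (by linarith : 0 ≤ x - l), stp_of_nonneg (by linarith : 0 ≤ x - (u + l) / 2),
      ppos_of_nonneg (by linarith : 0 ≤ x - u), stp_of_nonneg (by linarith : 0 ≤ x - l),
      stp_of_nonneg (by linarith : 0 ≤ x - u)]
  field_simp; ring

lemma phi1_bound {l u : ℝ} (hlu : l < u) (x : ℝ) :
    0 ≤ phi1 l u x ∧ phi1 l u x ≤ 4 / (u - l) := by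
  have hd : 0 < u - l := by linarith
  have h4 : 0 ≤ 4 / (u - l) := by positivity
  rcases le_total x l with h | h
  · rw [phi1_zero_left hlu h]; exact ⟨le_rfl, h4⟩
  rcases le_total u x with h' | h'
  · rw [phi1_zero_right hlu h']; exact ⟨le_rfl, h4⟩
  obtain ⟨z, hz⟩ : ∃ z, z = (x - l) / (u - l) := ⟨_, rfl⟩
  have hz0 : 0 ≤ z := by rw [hz]; exact div_nonneg (by linarith) hd.le
  have hz1 : z ≤ 1 := by rw [hz, div_le_one hd]; linarith
  have hx : x - l = z * (u - l) := by rw [hz]; field_simp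
  have hmid : x - (u + l) / 2 = (z - 1/2) * (u - l) := by linarith
  unfold phi1
  rw [ppos_of_nonneg (by linarith : 0 ≤ x - l), ppos_of_nonpos (by linarith : x - u ≤ 0)]
  rcases le_total z (1/2) with h2 | h2
  · rw [ppos_of_nonpos (by rw [hmid]; exact mul_nonpos_of_nonpos_of_nonneg (by linarith) hd.le), hx]
    have : 2 * (z * (u - l) + 0 + 0) / ((u - l) / 2) ^ 2 +
      3 * (0 ^ 2 - (z * (u - l)) ^ 2) / (2 * ((u - l) / 2) ^ 3) = (8 * z - 12 * z^2) / (u - l) := by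
      field_simp; ring
    rw [this]
    exact ⟨div_nonneg (by nlinarith) hd.le, by gcongr; nlinarith⟩
  · rw [ppos_of_nonneg (by rw [hmid]; exact mul_nonneg (by linarith) hd.le), hx, hmid]
    have : 2 * (z * (u - l) + (z - 1/2) * (u - l) + 0) / ((u - l) / 2) ^ 2 +
      3 * (0 ^ 2 - (z * (u - l)) ^ 2) / (2 * ((u - l) / 2) ^ 3) = (16 * z - 4 - 12 * z^2) / (u - l) := by
      field_simp; ring
    rw [this]
    exact ⟨div_nonneg (by nlinarith) hd.le, by gcongr; nlinarith⟩

lemma phi2_bound {l u : ℝ} (hlu : l < u) (x : ℝ) :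
    |phi2 l u x| ≤ 12 / (u - l) ^ 2 := by
  have hd : 0 < u - l := by linarith
  have h4 : 0 ≤ 12 / (u - l) ^ 2 := by positivity
  rcases lt_or_ge x l with h | h
  · rw [phi2_zero_left hlu h]; simpa using h4
  rcases le_or_gt u x with h' | h'
  · rw [phi2_zero_right hlu h']; simpa using h4
  obtain ⟨z, hz⟩ : ∃ z, z = (x - l) / (u - l) := ⟨_, rfl⟩
  have hz0 : 0 ≤ z := by rw [hz]; exact div_nonneg (by linarith) hd.le
  have hz1 : z ≤ 1 := by rw [hz, div_le_one hd]; linarith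
  have hx : x - l = z * (u - l) := by rw [hz]; field_simp
  have hmid : x - (u + l) / 2 = (z - 1/2) * (u - l) := by linarith
  unfold phi2
  rw [stp_of_nonneg (by linarith : 0 ≤ x - l), stp_of_neg (by linarith : x - u < 0),
    ppos_of_nonneg (by linarith : 0 ≤ x - l), ppos_of_nonpos (by linarith : x - u ≤ 0)]
  rcases lt_or_ge z (1/2) with h2 | h2
  · rw [stp_of_neg (by rw [hmid]; exact mul_neg_of_neg_of_pos (by linarith) hd), hx]
    have : 2 * ((1:ℝ) + 0 + 0) / ((u - l) / 2) ^ 2 +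
      3 * (0 - (z * (u - l))) / (((u - l) / 2) ^ 3) = (8 - 24 * z) / (u - l) ^ 2 := by
      field_simp; ring
    rw [this, abs_div, abs_of_pos (by positivity : 0 < (u-l)^2)]
    gcongr
    rw [abs_le]; constructor <;> linarith
  · rw [stp_of_nonneg (by rw [hmid]; exact mul_nonneg (by linarith) hd.le), hx]
    have : 2 * ((1:ℝ) + 1 + 0) / ((u - l) / 2) ^ 2 +
      3 * (0 - (z * (u - l))) / (((u - l) / 2) ^ 3) = (16 - 24 * z) / (u - l) ^ 2 := by
      field_simp; ring
    rw [this, abs_div, abs_of_pos (by positivity : 0 < (u-l)^2)]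
    gcongr
    rw [abs_le]; constructor <;> linarith

lemma phiSm_zero_left {l u x : ℝ} (h : x ≤ l) : phiSm l u x = 0 := if_pos h

lemma phiSm_mono {l u : ℝ} (hlu : l < u) : Monotone (phiSm l u) :=
  monotone_of_hasDerivAt_nonneg (phiSm_deriv hlu) (fun x => (phi1_bound hlu x).1)

lemma phiSm_bound {l u : ℝ} (hlu : l < u) (x : ℝ) : 0 ≤ phiSm l u x ∧ phiSm l u x ≤ 1 := by
  constructor
  · rw [← phiSm_zero_left (l := l) (u := u) (min_le_right x l)]
    exact phiSm_mono hlu (min_le_left _ _)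
  · have : phiSm l u (max x (u+1)) = 1 := by
      have := le_max_right x (u+1)
      unfold phiSm
      rw [if_neg (by linarith), if_neg (by linarith), if_neg (by linarith)]
    rw [← this]
    exact phiSm_mono hlu (le_max_left _ _)

lemma phiSm_lip {l u : ℝ} (hlu : l < u) (x y : ℝ) :
    |phiSm l u x - phiSm l u y| ≤ 4 / (u - l) * |x - y| := by
  have := Convex.norm_image_sub_le_of_norm_hasDerivWithin_le (f := phiSm l u) (s := Set.univ)
    (fun x _ => (phiSm_deriv hlu x).hasDerivWithinAt)
    (C := 4 / (u - l)) (fun x _ => by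
      rw [Real.norm_eq_abs, abs_of_nonneg (phi1_bound hlu x).1]; exact (phi1_bound hlu x).2)
    convex_univ (Set.mem_univ y) (Set.mem_univ x)
  simpa using this

lemma phi1_lip {l u : ℝ} (hlu : l < u) (x y : ℝ) :
    |phi1 l u x - phi1 l u y| ≤ 12 / (u - l) ^ 2 * |x - y| := by
  wlog h : y ≤ x generalizing x y
  · rw [abs_sub_comm, abs_sub_comm x]; exact this y x (le_of_not_ge h)
  have := norm_image_sub_le_of_norm_deriv_right_le_segment (f := phi1 l u) (a := y) (b := x)
    (phi1_continuous l u).continuousOn (fun x _ => phi1_right l u x)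
    (C := 12 / (u - l)^2) (fun x _ => phi2_bound hlu x) x ⟨h, le_rfl⟩
  rwa [abs_of_nonneg (sub_nonneg.2 h)]

end

noncomputable section
open MeasureTheory Set Filter Topology

lemma int_pow_exp (k j : ℕ) :
    IntegrableOn (fun t : ℝ => t ^ k * Real.exp (-t) ^ (j + 1)) (Ioi 0) := by
  have h := Real.GammaIntegral_convergent (s := k + 1) (by positivity)
  refine Integrable.mono' h (by fun_prop) ?_
  filter_upwards [ae_restrict_mem measurableSet_Ioi] with t ht
  have ht' : 0 ≤ t := le_of_lt ht
  have e : t ^ ((k:ℝ) + 1 - 1) = t ^ k := by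
    rw [add_sub_cancel_right, Real.rpow_natCast]
  rw [e, Real.norm_eq_abs, abs_of_nonneg (by positivity), mul_comm]
  gcongr
  rw [pow_succ]
  refine mul_le_of_le_one_left (Real.exp_pos _).le (pow_le_one₀ (Real.exp_pos _).le ?_)
  exact Real.exp_le_one_iff.2 (by linarith)

def AA (b : ℝ) (p : ℝ × ℝ) (t : ℝ) : ℝ := b - (p.1 + b + p.2 * t) * Real.exp (-t)

def JJ (b : ℝ) (ψ : ℝ → ℝ) (k j : ℕ) (p : ℝ × ℝ) : ℝ :=
  ∫ t in Ioi (0:ℝ), ψ (AA b p t) * (t ^ k * Real.exp (-t) ^ j)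

lemma AA_cont (b : ℝ) (p : ℝ × ℝ) : Continuous (AA b p) := by unfold AA; fun_prop

lemma AA_ae (b c : ℝ) (hc : c ≠ b) (p : ℝ × ℝ) :
    ∀ᵐ t ∂(volume.restrict (Ioi (0:ℝ))), AA b p t ≠ c := by
  refine ae_restrict_of_ae ?_
  have han : AnalyticOnNhd ℝ (fun t => AA b p t - c) univ := by
    intro t _
    unfold AA
    fun_prop
  have hlim : Tendsto (AA b p) atTop (𝓝 b) := by
    have h1 : Tendsto (fun t : ℝ => Real.exp (-t)) atTop (𝓝 0) := by
      simpa using Real.tendsto_pow_mul_exp_neg_atTop_nhds_zero 0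
    have h2 : Tendsto (fun t : ℝ => t * Real.exp (-t)) atTop (𝓝 0) := by
      simpa using Real.tendsto_pow_mul_exp_neg_atTop_nhds_zero 1
    have := ((h1.const_mul (p.1 + b)).add (h2.const_mul p.2)).const_sub b
    simp only [mul_zero, add_zero, sub_zero] at this
    refine this.congr fun t => ?_
    unfold AA; ring
  obtain ⟨x, hx⟩ : ∃ x, AA b p x ≠ c :=
    (hlim.eventually (isOpen_ne.mem_nhds hc.symm)).exists
  have := han.preimage_zero_mem_codiscrete (x := x) (sub_ne_zero.2 hx)
  have h2 := ae_restrict_le_codiscreteWithin (μ := (volume : Measure ℝ)) MeasurableSet.univ this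
  rw [Measure.restrict_univ] at h2
  filter_upwards [h2] with t ht h
  apply ht
  simp [h]

lemma AA_tendsto (b : ℝ) (p : ℝ × ℝ) : Tendsto (AA b p) atTop (𝓝 b) := by
  have h1 : Tendsto (fun t : ℝ => Real.exp (-t)) atTop (𝓝 0) := by
    simpa using Real.tendsto_pow_mul_exp_neg_atTop_nhds_zero 0
  have h2 : Tendsto (fun t : ℝ => t * Real.exp (-t)) atTop (𝓝 0) := by
    simpa using Real.tendsto_pow_mul_exp_neg_atTop_nhds_zero 1
  have := ((h1.const_mul (p.1 + b)).add (h2.const_mul p.2)).const_sub b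
  simp only [mul_zero, add_zero, sub_zero] at this
  refine this.congr fun t => ?_
  unfold AA; ring

lemma AA_deriv_t (b : ℝ) (p : ℝ × ℝ) (t : ℝ) :
    HasDerivAt (AA b p) ((p.1 + b + p.2 * t - p.2) * Real.exp (-t)) t := by
  have h1 : HasDerivAt (fun t : ℝ => p.1 + b + p.2 * t) p.2 t := by
    simpa using ((hasDerivAt_id t).const_mul p.2).const_add (p.1 + b)
  have h2 : HasDerivAt (fun t : ℝ => Real.exp (-t)) (-Real.exp (-t)) t := by
    simpa using (hasDerivAt_neg t).exp
  refine HasDerivAt.congr_deriv ((h1.mul h2).const_sub b) ?_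
  ring

lemma AA_fderiv (b : ℝ) (p : ℝ × ℝ) (t : ℝ) :
    HasFDerivAt (fun q => AA b q t)
      (-(Real.exp (-t) • ContinuousLinearMap.fst ℝ ℝ ℝ +
        (t * Real.exp (-t)) • ContinuousLinearMap.snd ℝ ℝ ℝ)) p := by
  have h := (((hasFDerivAt_fst (𝕜 := ℝ) (p := p)).add_const b).add
    ((hasFDerivAt_snd (𝕜 := ℝ) (p := p)).mul_const t)).mul_const (Real.exp (-t))
  refine HasFDerivAt.congr_fderiv (h.const_sub b) ?_
  ext <;> simp; ring

lemma JJ_integrable_bdd (b : ℝ) (ψ : ℝ → ℝ) (C : ℝ) (hm : Measurable ψ) (hb : ∀ x, |ψ x| ≤ C)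
    (k j : ℕ) (p : ℝ × ℝ) :
    IntegrableOn (fun t => ψ (AA b p t) * (t ^ k * Real.exp (-t) ^ (j + 1))) (Ioi 0) := by
  refine Integrable.bdd_mul (c := C) (int_pow_exp k j)
    (hm.comp (AA_cont b p).measurable).aestronglyMeasurable ?_
  exact ae_of_all _ fun t => hb _

lemma JJ_integrable_lip (b : ℝ) (ψ : ℝ → ℝ) (C : ℝ) (hm : Measurable ψ)
    (hl : ∀ x y, |ψ x - ψ y| ≤ C * |x - y|) (hb : ψ b = 0)
    (k j : ℕ) (p : ℝ × ℝ) :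
    IntegrableOn (fun t => ψ (AA b p t) * (t ^ k * Real.exp (-t) ^ j)) (Ioi 0) := by
  have hC : 0 ≤ C := by simpa using (abs_nonneg _).trans (hl 1 0)
  have h1 := ((int_pow_exp k j).const_mul (C * |p.1 + b|)).add
    ((int_pow_exp (k+1) j).const_mul (C * |p.2|))
  have hψ := (hm.comp (AA_cont b p).measurable)
  refine Integrable.mono' h1 (Measurable.aestronglyMeasurable (hψ.mul (by fun_prop))) ?_
  filter_upwards [ae_restrict_mem measurableSet_Ioi] with t ht
  have ht' : 0 ≤ t := le_of_lt ht
  have e := hl (AA b p t) b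
  rw [hb, sub_zero] at e
  have e2 : |AA b p t - b| ≤ (|p.1 + b| + |p.2| * t) * Real.exp (-t) := by
    have : AA b p t - b = -((p.1 + b + p.2 * t) * Real.exp (-t)) := by unfold AA; ring
    rw [this, abs_neg, abs_mul, abs_of_pos (Real.exp_pos _)]
    gcongr
    refine (abs_add_le _ _).trans ?_
    rw [abs_mul, abs_of_nonneg ht']
  rw [Real.norm_eq_abs, abs_mul, abs_of_nonneg (by positivity : 0 ≤ t ^ k * Real.exp (-t) ^ j)]
  calc _ ≤ (C * ((|p.1 + b| + |p.2| * t) * Real.exp (-t))) * (t ^ k * Real.exp (-t) ^ j) := by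
        gcongr
        exact e.trans (by gcongr)
    _ = _ := by simp only [Pi.add_apply]; ring

lemma JJ_continuous (b : ℝ) (ψ : ℝ → ℝ) (C : ℝ) (hm : Measurable ψ) (hb : ∀ x, |ψ x| ≤ C)
    (S : Finset ℝ) (hS : b ∉ S) (hc : ∀ x ∉ S, ContinuousAt ψ x) (k j : ℕ) :
    Continuous (JJ b ψ k (j + 1)) := by
  rw [continuous_iff_continuousAt]
  intro p
  refine continuousAt_of_dominated (bound := fun t => C * (t ^ k * Real.exp (-t) ^ (j + 1)))
    ?_ ?_ ?_ ?_
  · exact Eventually.of_forall fun q => (JJ_integrable_bdd b ψ C hm hb k j q).1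
  · refine Eventually.of_forall fun q => ?_
    filter_upwards [ae_restrict_mem measurableSet_Ioi] with t ht
    have ht' : 0 ≤ t := le_of_lt ht
    rw [Real.norm_eq_abs, abs_mul,
      abs_of_nonneg (by positivity : 0 ≤ t ^ k * Real.exp (-t) ^ (j+1))]
    gcongr
    exact hb _
  · exact (int_pow_exp k j).const_mul C
  · have : ∀ᵐ t ∂(volume.restrict (Ioi (0:ℝ))), ∀ c ∈ S, AA b p t ≠ c :=
      (ae_ball_iff S.countable_toSet).2 fun c hcS => AA_ae b c (fun h => hS (h ▸ hcS)) p
    filter_upwards [this] with t ht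
    refine ContinuousAt.mul ?_ continuousAt_const
    refine ContinuousAt.comp (f := fun q => AA b q t) (hc _ (fun h => ht _ h rfl)) ?_
    exact (AA_fderiv b p t).continuousAt

lemma JJ_hasFDerivAt (b : ℝ) (ψ ψ' : ℝ → ℝ) (C : ℝ) (hm : Measurable ψ) (hm' : Measurable ψ')
    (hb : ∀ x, |ψ' x| ≤ C)
    (hl : ∀ x y, |ψ x - ψ y| ≤ C * |x - y|) (hb0 : ψ b = 0)
    (S : Finset ℝ) (hS : b ∉ S) (hc : ∀ x ∉ S, HasDerivAt ψ (ψ' x) x) (k j : ℕ) (p : ℝ × ℝ) :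
    HasFDerivAt (JJ b ψ k j)
      (-(JJ b ψ' k (j + 1) p • ContinuousLinearMap.fst ℝ ℝ ℝ +
        JJ b ψ' (k + 1) (j + 1) p • ContinuousLinearMap.snd ℝ ℝ ℝ)) p := by
  have hC : 0 ≤ C := by simpa using (abs_nonneg _).trans (hl 1 0)
  set F' : ℝ → (ℝ × ℝ →L[ℝ] ℝ) := fun t =>
    -((ψ' (AA b p t) * (t ^ k * Real.exp (-t) ^ (j+1))) • ContinuousLinearMap.fst ℝ ℝ ℝ +
      (ψ' (AA b p t) * (t ^ (k+1) * Real.exp (-t) ^ (j+1))) • ContinuousLinearMap.snd ℝ ℝ ℝ) with hF'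
  have i1 := JJ_integrable_bdd b ψ' C hm' hb k j p
  have i2 := JJ_integrable_bdd b ψ' C hm' hb (k+1) j p
  have j1 := i1.smul_const (ContinuousLinearMap.fst ℝ ℝ ℝ)
  have j2 := i2.smul_const (ContinuousLinearMap.snd ℝ ℝ ℝ)
  have hFint : Integrable F' (volume.restrict (Ioi 0)) := (j1.add j2).neg
  have hval : ∫ t in Ioi (0:ℝ), F' t = -(JJ b ψ' k (j + 1) p • ContinuousLinearMap.fst ℝ ℝ ℝ +
        JJ b ψ' (k + 1) (j + 1) p • ContinuousLinearMap.snd ℝ ℝ ℝ) := by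
    rw [hF', integral_neg, integral_add j1 j2, integral_smul_const, integral_smul_const]
    rfl
  rw [← hval]
  refine (hasFDerivAt_integral_of_dominated_loc_of_lip (s := univ)
    (bound := fun t => C * (t ^ k * Real.exp (-t) ^ (j + 1) + t ^ (k+1) * Real.exp (-t) ^ (j + 1)))
    univ_mem ?_ ?_ hFint.1 ?_ ?_ ?_).2
  · exact Eventually.of_forall fun q => (JJ_integrable_lip b ψ C hm hl hb0 k j q).1
  · exact JJ_integrable_lip b ψ C hm hl hb0 k j p
  · filter_upwards [ae_restrict_mem measurableSet_Ioi] with t ht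
    have ht' : 0 ≤ t := le_of_lt ht
    refine LipschitzOnWith.of_dist_le_mul fun x _ y _ => ?_
    rw [Real.dist_eq, ← sub_mul, abs_mul,
      abs_of_nonneg (by positivity : 0 ≤ t ^ k * Real.exp (-t) ^ j), Real.coe_nnabs,
      abs_of_nonneg (by positivity : 0 ≤ C * (t ^ k * Real.exp (-t) ^ (j + 1) +
        t ^ (k+1) * Real.exp (-t) ^ (j + 1)))]
    have h1 : |AA b x t - AA b y t| ≤ (1 + t) * Real.exp (-t) * dist x y := by
      have e : AA b x t - AA b y t = -(((x.1 - y.1) + (x.2 - y.2) * t) * Real.exp (-t)) := by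
        unfold AA; ring
      have d1 : |x.1 - y.1| ≤ dist x y := by
        rw [Prod.dist_eq]; exact le_max_left _ _
      have d2 : |x.2 - y.2| ≤ dist x y := by
        rw [Prod.dist_eq]; exact le_max_right _ _
      rw [e, abs_neg, abs_mul, abs_of_pos (Real.exp_pos _)]
      calc _ ≤ (dist x y + dist x y * t) * Real.exp (-t) := by
            gcongr
            refine (abs_add_le _ _).trans ?_
            rw [abs_mul, abs_of_nonneg ht']
            gcongr
        _ = _ := by ring
    calc _ ≤ (C * ((1 + t) * Real.exp (-t) * dist x y)) * (t ^ k * Real.exp (-t) ^ j) := by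
          refine mul_le_mul_of_nonneg_right ?_ (by positivity)
          exact (hl _ _).trans (mul_le_mul_of_nonneg_left h1 hC)
      _ = _ := by ring
  · exact ((int_pow_exp k j).add (int_pow_exp (k+1) j)).const_mul C
  · have : ∀ᵐ t ∂(volume.restrict (Ioi (0:ℝ))), ∀ c ∈ S, AA b p t ≠ c :=
      (ae_ball_iff S.countable_toSet).2 fun c hcS => AA_ae b c (fun h => hS (h ▸ hcS)) p
    filter_upwards [this] with t ht
    have h1 := (hc _ (fun h => ht _ h rfl)).comp_hasFDerivAt p (AA_fderiv b p t)
    refine HasFDerivAt.congr_fderiv (h1.mul_const (t ^ k * Real.exp (-t) ^ j)) ?_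
    ext <;> simp [hF'] <;> ring

end

noncomputable section
open MeasureTheory Set Filter Topology

lemma JJ_bound {b l u : ℝ} (hbl : b < l) (hlu : l < u) (ψ : ℝ → ℝ) (C : ℝ) (hC : 0 ≤ C)
    (hb : ∀ x, |ψ x| ≤ C) (p : ℝ × ℝ) (hp : 0 ≤ p.2)
    (h0 : ∀ t, 0 < t → AA b p t ∉ Icc l u → ψ (AA b p t) = 0) (j : ℕ) :
    |JJ b ψ 0 j p| ≤ C * Real.log ((u - b) / (l - b)) := by
  set T : Set ℝ := Ioi 0 ∩ (AA b p) ⁻¹' (Icc l u) with hT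
  have hTm : MeasurableSet T := measurableSet_Ioi.inter ((AA_cont b p).measurable measurableSet_Icc)
  have hL : 0 ≤ Real.log ((u - b) / (l - b)) := by
    apply Real.log_nonneg
    rw [le_div_iff₀ (by linarith)]; linarith
  have key : ∀ x ∈ T, ∀ y ∈ T, x ≤ y → y - x ≤ Real.log ((u - b) / (l - b)) := by
    rintro x ⟨hx0, hx1, hx2⟩ y ⟨hy0, hy1, hy2⟩ hxy
    rw [Real.le_log_iff_exp_le (div_pos (by linarith) (by linarith)),
      le_div_iff₀ (by linarith)]
    have e1 : Real.exp (y - x) * Real.exp (-y) = Real.exp (-x) := by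
      rw [← Real.exp_add]; ring_nf
    calc Real.exp (y - x) * (l - b) ≤ Real.exp (y - x) * (AA b p y - b) := by gcongr
      _ = -(p.1 + b + p.2 * y) * Real.exp (-x) := by
          rw [← e1]; unfold AA; ring
      _ ≤ -(p.1 + b + p.2 * x) * Real.exp (-x) := by
          gcongr
      _ = AA b p x - b := by unfold AA; ring
      _ ≤ u - b := by linarith
  have hvol : volume T ≤ ENNReal.ofReal (Real.log ((u - b) / (l - b))) := by
    refine (Real.volume_le_diam T).trans (Metric.ediam_le fun x hx y hy => ?_)
    rw [edist_dist]
    apply ENNReal.ofReal_le_ofReal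
    rw [Real.dist_eq]
    rcases le_total x y with h | h
    · rw [abs_sub_comm, abs_of_nonneg (by linarith)]; exact key x hx y hy h
    · rw [abs_of_nonneg (by linarith)]; exact key y hy x hx h
  have e : JJ b ψ 0 j p = ∫ t in T, ψ (AA b p t) * (t ^ 0 * Real.exp (-t) ^ j) := by
    refine setIntegral_eq_of_subset_of_forall_sdiff_eq_zero measurableSet_Ioi inter_subset_left ?_
    rintro t ⟨ht, ht2⟩
    rw [h0 t ht (fun h => ht2 ⟨ht, h⟩), zero_mul]
  rw [e]
  have := norm_setIntegral_le_of_norm_le_const (μ := volume) (s := T)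
    (f := fun t => ψ (AA b p t) * (t ^ 0 * Real.exp (-t) ^ j)) (C := C)
    (hvol.trans_lt ENNReal.ofReal_lt_top) (fun t ht => by
      have ht' : 0 ≤ t := le_of_lt ht.1
      rw [Real.norm_eq_abs, abs_mul, pow_zero, one_mul,
        abs_of_nonneg (by positivity : 0 ≤ Real.exp (-t) ^ j)]
      calc _ ≤ C * 1 := mul_le_mul (hb _)
            (pow_le_one₀ (Real.exp_pos _).le (Real.exp_le_one_iff.2 (by linarith)))
            (by positivity) hC
        _ = C := mul_one _)
  refine this.trans ?_
  gcongr
  rw [Measure.real]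
  exact ENNReal.toReal_le_of_le_ofReal hL hvol

section

lemma F_fd {b l u : ℝ} (hbl : b < l) (hlu : l < u) (p : ℝ × ℝ) :
    HasFDerivAt (JJ b (phiSm l u) 0 0)
      (-(JJ b (phi1 l u) 0 1 p • ContinuousLinearMap.fst ℝ ℝ ℝ +
        JJ b (phi1 l u) 1 1 p • ContinuousLinearMap.snd ℝ ℝ ℝ)) p :=
  JJ_hasFDerivAt b _ _ (4 / (u - l))
    (continuous_iff_continuousAt.2 fun x => (phiSm_deriv hlu x).continuousAt).measurable
    (phi1_continuous l u).measurable
    (fun x => by rw [abs_of_nonneg (phi1_bound hlu x).1]; exact (phi1_bound hlu x).2)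
    (phiSm_lip hlu) (phiSm_zero_left hbl.le) ∅ (by simp) (fun x _ => phiSm_deriv hlu x) 0 0 p

lemma F1_fd {b l u : ℝ} (hbl : b < l) (hlu : l < u) (k : ℕ) (p : ℝ × ℝ) :
    HasFDerivAt (JJ b (phi1 l u) k 1)
      (-(JJ b (phi2 l u) k 2 p • ContinuousLinearMap.fst ℝ ℝ ℝ +
        JJ b (phi2 l u) (k+1) 2 p • ContinuousLinearMap.snd ℝ ℝ ℝ)) p := by
  refine JJ_hasFDerivAt b _ _ (12 / (u - l)^2)
    (phi1_continuous l u).measurable (phi2_measurable l u)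
    (phi2_bound hlu)
    (phi1_lip hlu) (phi1_zero_left hlu hbl.le) {l, (u+l)/2, u} ?_ ?_ k 1 p
  · simp only [Finset.mem_insert, Finset.mem_singleton, not_or]
    refine ⟨?_, ?_, ?_⟩ <;> intro h <;> linarith
  · intro x hx
    simp only [Finset.mem_insert, Finset.mem_singleton, not_or] at hx
    exact phi1_deriv l u hx.1 hx.2.1 hx.2.2

lemma F11_cont {b l u : ℝ} (hbl : b < l) (hlu : l < u) (k : ℕ) : Continuous (JJ b (phi2 l u) k 2) := by
  refine JJ_continuous b _ (12 / (u - l)^2) (phi2_measurable l u)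
    (phi2_bound hlu) {l, (u+l)/2, u} ?_ ?_ k 1
  · simp only [Finset.mem_insert, Finset.mem_singleton, not_or]
    refine ⟨?_, ?_, ?_⟩ <;> intro h <;> linarith
  · intro x hx
    simp only [Finset.mem_insert, Finset.mem_singleton, not_or] at hx
    exact phi2_contAt l u hx.1 hx.2.1 hx.2.2

lemma F1_contDiff {b l u : ℝ} (hbl : b < l) (hlu : l < u) (k : ℕ) : ContDiff ℝ 1 (JJ b (phi1 l u) k 1) := by
  rw [contDiff_one_iff_hasFDerivAt]
  refine ⟨_, ?_, F1_fd hbl hlu k⟩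
  have := F11_cont hbl hlu k
  have := F11_cont hbl hlu (k+1)
  fun_prop

lemma F_contDiff {b l u : ℝ} (hbl : b < l) (hlu : l < u) : ContDiff ℝ 2 (JJ b (phiSm l u) 0 0) := by
  have := (contDiff_succ_iff_hasFDerivAt (𝕜 := ℝ) (n := 1) (f := JJ b (phiSm l u) 0 0)).2
    ⟨_, ?_, F_fd hbl hlu⟩
  · exact_mod_cast this
  have := F1_contDiff hbl hlu 0
  have := F1_contDiff hbl hlu 1
  fun_prop

lemma F_pde {b l u : ℝ} (hbl : b < l) (hlu : l < u) (p : ℝ × ℝ) :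
    (-p.1 + p.2 - b) * (-JJ b (phi1 l u) 0 1 p) - p.2 * (-JJ b (phi1 l u) 1 1 p)
      = -phiSm l u (-p.1) := by
  have hb1 : ∀ x, |phi1 l u x| ≤ 4 / (u - l) := fun x => by
    rw [abs_of_nonneg (phi1_bound hlu x).1]; exact (phi1_bound hlu x).2
  have i0 := JJ_integrable_bdd b (phi1 l u) _ (phi1_continuous l u).measurable hb1 0 0 p
  have i1 := JJ_integrable_bdd b (phi1 l u) _ (phi1_continuous l u).measurable hb1 1 0 p
  have hI : IntegrableOn (fun t =>
      (p.1 + b - p.2) * (phi1 l u (AA b p t) * (t ^ 0 * Real.exp (-t) ^ (0+1))) +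
      p.2 * (phi1 l u (AA b p t) * (t ^ 1 * Real.exp (-t) ^ (0+1)))) (Ioi 0) := (i0.const_mul (p.1 + b - p.2)).add (i1.const_mul p.2)
  have key := integral_Ioi_of_hasDerivAt_of_tendsto' (a := 0)
    (f := fun t => phiSm l u (AA b p t))
    (f' := fun t => (p.1 + b - p.2) * (phi1 l u (AA b p t) * (t ^ 0 * Real.exp (-t) ^ (0+1))) +
      p.2 * (phi1 l u (AA b p t) * (t ^ 1 * Real.exp (-t) ^ (0+1))))
    (m := phiSm l u b) (fun t _ => by
      have := (phiSm_deriv hlu (AA b p t)).comp t (AA_deriv_t b p t)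
      refine HasDerivAt.congr_deriv this ?_
      ring) hI
      ((phiSm_deriv hlu b).continuousAt.tendsto.comp (AA_tendsto b p))
  rw [integral_add (i0.const_mul _) (i1.const_mul _), integral_const_mul, integral_const_mul,
    phiSm_zero_left hbl.le] at key
  have e : AA b p 0 = -p.1 := by simp [AA]
  rw [e] at key
  unfold JJ
  linarith

lemma F1_bdry {b l u : ℝ} (hbl : b < l) (hlu : l < u) (k : ℕ) (hb : 0 < b) (x2 : ℝ) (h2 : 0 ≤ x2) : JJ b (phi1 l u) k 1 (0, x2) = 0 := by
  unfold JJ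
  refine setIntegral_eq_zero_of_forall_eq_zero fun t ht => ?_
  have ht' : 0 ≤ t := le_of_lt ht
  have : AA b (0, x2) t ≤ b := by
    unfold AA
    have : 0 ≤ ((0:ℝ) + b + x2 * t) * Real.exp (-t) := by positivity
    simpa using this
  rw [phi1_zero_left hlu (by linarith), zero_mul]

lemma F_ub {b l u : ℝ} (hbl : b < l) (hlu : l < u) (p : ℝ × ℝ) (h2 : 0 ≤ p.2) (h1 : -u ≤ p.1) :
    JJ b (phiSm l u) 0 0 p ≤ Real.log ((u - b) / (l - b)) := by
  have := JJ_bound hbl hlu (phiSm l u) 1 zero_le_one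
    (fun x => by rw [abs_of_nonneg (phiSm_bound hlu x).1]; exact (phiSm_bound hlu x).2) p h2
    (fun t ht hn => ?_) 0
  · rw [one_mul] at this; exact (le_abs_self _).trans this
  · by_cases hA : AA b p t ≤ l
    · exact phiSm_zero_left hA
    exfalso
    apply hn
    refine ⟨le_of_not_ge hA, ?_⟩
    push Not at hA
    have he : Real.exp (-t) ≤ 1 := Real.exp_le_one_iff.2 (by linarith)
    have hep := Real.exp_pos (-t)
    have h3 : -(p.1 + b + p.2 * t) ≤ u - b := by nlinarith
    have h4 : AA b p t - b = -(p.1 + b + p.2 * t) * Real.exp (-t) := by unfold AA; ring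
    have : -(p.1 + b + p.2 * t) * Real.exp (-t) ≤ (u - b) * 1 := by
      have : -(p.1 + b + p.2 * t) * Real.exp (-t) ≤ (u - b) * Real.exp (-t) := by gcongr
      refine this.trans ?_
      gcongr
      linarith
    linarith

lemma F1_ub {b l u : ℝ} (hbl : b < l) (hlu : l < u) (p : ℝ × ℝ) (h2 : 0 ≤ p.2) :
    |JJ b (phi1 l u) 0 1 p| ≤ 4 / (u - l) * Real.log ((u - b) / (l - b)) := by
  refine JJ_bound hbl hlu (phi1 l u) _ (div_nonneg (by norm_num) (by linarith))
    (fun x => by rw [abs_of_nonneg (phi1_bound hlu x).1]; exact (phi1_bound hlu x).2) p h2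
    (fun t ht hn => ?_) 1
  by_cases hA : AA b p t ≤ l
  · exact phi1_zero_left hlu hA
  · exact phi1_zero_right hlu (by
      by_contra h; exact hn ⟨le_of_not_ge hA, le_of_not_ge h⟩)

lemma F11_ub {b l u : ℝ} (hbl : b < l) (hlu : l < u) (p : ℝ × ℝ) (h2 : 0 ≤ p.2) :
    |JJ b (phi2 l u) 0 2 p| ≤ 12 / (u - l)^2 * Real.log ((u - b) / (l - b)) := by
  refine JJ_bound hbl hlu (phi2 l u) _ (div_nonneg (by norm_num) (by positivity))
    (phi2_bound hlu) p h2
    (fun t ht hn => ?_) 2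
  by_cases hA : AA b p t < l
  · exact phi2_zero_left hlu hA
  · exact phi2_zero_right hlu (by
      by_contra h; exact hn ⟨le_of_not_gt hA, le_of_not_ge h⟩)

lemma F_dx1 {b l u : ℝ} (hbl : b < l) (hlu : l < u) (x1 x2 : ℝ) :
    HasDerivAt (fun t => JJ b (phiSm l u) 0 0 (t, x2)) (-JJ b (phi1 l u) 0 1 (x1, x2)) x1 := by
  have := (F_fd hbl hlu (x1, x2)).comp_hasDerivAt x1 ((hasDerivAt_id x1).prodMk (hasDerivAt_const x1 x2))
  refine HasDerivAt.congr_deriv this ?_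
  simp
lemma F_dx2 {b l u : ℝ} (hbl : b < l) (hlu : l < u) (x1 x2 : ℝ) :
    HasDerivAt (fun t => JJ b (phiSm l u) 0 0 (x1, t)) (-JJ b (phi1 l u) 1 1 (x1, x2)) x2 := by
  have := (F_fd hbl hlu (x1, x2)).comp_hasDerivAt x2 ((hasDerivAt_const x2 x1).prodMk (hasDerivAt_id x2))
  refine HasDerivAt.congr_deriv this ?_
  simp
lemma F1_dx1 {b l u : ℝ} (hbl : b < l) (hlu : l < u) (x1 x2 : ℝ) :
    HasDerivAt (fun t => -JJ b (phi1 l u) 0 1 (t, x2)) (JJ b (phi2 l u) 0 2 (x1, x2)) x1 := by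
  have := ((F1_fd hbl hlu 0 (x1, x2)).comp_hasDerivAt x1
    ((hasDerivAt_id x1).prodMk (hasDerivAt_const x1 x2))).neg
  refine HasDerivAt.congr_deriv this ?_
  simp

end
end

noncomputable section
open MeasureTheory Set Filter Topology

def gg (b m r : ℝ) : ℝ := (max r m - b) / (max r m) ^ 2
def hh (b m w : ℝ) : ℝ := b / m + Real.log m + ∫ r in m..w, gg b m r

section

lemma gg_pos {b m : ℝ} (hb : 0 < b) (hm : b < m) (r : ℝ) : 0 < gg b m r := by
  have : m ≤ max r m := le_max_right _ _
  exact div_pos (by linarith) (pow_pos (by linarith) 2)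

lemma gg_cont {b m : ℝ} (hb : 0 < b) (hm : b < m) : Continuous (gg b m) := by
  unfold gg
  refine Continuous.div (by fun_prop) (by fun_prop) fun r => ?_
  have : m ≤ max r m := le_max_right _ _
  exact (pow_pos (by linarith) 2).ne'

lemma hh_deriv {b m : ℝ} (hb : 0 < b) (hm : b < m) (w : ℝ) : HasDerivAt (hh b m) (gg b m w) w :=
  (intervalIntegral.integral_hasDerivAt_right ((gg_cont hb hm).intervalIntegrable _ _)
    ((gg_cont hb hm).stronglyMeasurableAtFilter _ _) (gg_cont hb hm).continuousAt).const_add _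

lemma hh_cont {b m : ℝ} (hb : 0 < b) (hm : b < m) : Continuous (hh b m) :=
  continuous_iff_continuousAt.2 fun w => (hh_deriv hb hm w).continuousAt

lemma hh_strictMono {b m : ℝ} (hb : 0 < b) (hm : b < m) : StrictMono (hh b m) :=
  strictMono_of_hasDerivAt_pos (hh_deriv hb hm) (gg_pos hb hm)

lemma hh_eq {b m : ℝ} (hb : 0 < b) (hm : b < m) {w : ℝ} (hw : m ≤ w) : hh b m w = b / w + Real.log w := by
  have : ∫ r in m..w, gg b m r = (b / w + Real.log w) - (b / m + Real.log m) := by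
    refine intervalIntegral.integral_eq_sub_of_hasDerivAt (f := fun r => b / r + Real.log r)
      (fun r hr => ?_) ((gg_cont hb hm).intervalIntegrable _ _)
    rw [uIcc_of_le hw] at hr
    have hr0 : r ≠ 0 := by linarith [hr.1]
    have h1 := ((hasDerivAt_inv hr0).const_mul b).add (Real.hasDerivAt_log hr0)
    refine HasDerivAt.congr_deriv (h1.congr_of_eventuallyEq ?_) ?_
    · exact Eventually.of_forall fun x => by simp [div_eq_mul_inv]
    · unfold gg
      rw [max_eq_left hr.1]
      field_simp; ring
  rw [hh, this]; ring

lemma hh_surj {b m : ℝ} (hb : 0 < b) (hm : b < m) : Function.Surjective (hh b m) := by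
  refine (hh_cont hb hm).surjective ?_ ?_
  · refine tendsto_atTop_mono' _ ?_ Real.tendsto_log_atTop
    filter_upwards [eventually_ge_atTop m] with w hw
    rw [hh_eq hb hm hw]
    have : 0 ≤ b / w := div_nonneg hb.le (by linarith)
    linarith
  · have h1 : Tendsto (fun w : ℝ => b / m + Real.log m + (w - m) * gg b m m) atBot atBot := by
      refine tendsto_atBot_add_const_left _ _ ?_
      refine Tendsto.atBot_mul_const (gg_pos hb hm m) ?_
      exact tendsto_atBot_add_const_right _ _ tendsto_id
    refine h1.congr' ?_
    filter_upwards [eventually_le_atBot m] with w hw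
    rw [hh]
    congr 1
    have : ∫ r in m..w, gg b m r = ∫ r in m..w, gg b m m := by
      refine intervalIntegral.integral_congr fun r hr => ?_
      rw [uIcc_of_ge hw] at hr
      simp only [gg, max_eq_right hr.2, max_self]
    rw [this, intervalIntegral.integral_const, smul_eq_mul]

lemma WW_exists {b m : ℝ} (hb : 0 < b) (hm : b < m) : ∃ W : ℝ → ℝ, (∀ w, W (hh b m w) = w) ∧ (∀ q, hh b m (W q) = q) ∧ Monotone W ∧
    ContDiff ℝ 1 W ∧ ∀ q, HasDerivAt W (gg b m (W q))⁻¹ q := by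
  let e := StrictMono.orderIsoOfSurjective (hh b m) (hh_strictMono hb hm) (hh_surj hb hm)
  have hc : Continuous e.symm := e.symm.continuous
  have h1 : ∀ q, hh b m (e.symm q) = q := fun q => e.apply_symm_apply q
  have hd : ∀ q, HasDerivAt e.symm (gg b m (e.symm q))⁻¹ q := fun q =>
    HasDerivAt.of_local_left_inverse hc.continuousAt (hh_deriv hb hm _)
      (gg_pos hb hm _).ne' (Eventually.of_forall h1)
  refine ⟨e.symm, fun w => e.symm_apply_apply w, h1, e.symm.monotone, ?_, hd⟩
  rw [contDiff_one_iff_deriv]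
  refine ⟨fun q => (hd q).differentiableAt, ?_⟩
  have : deriv e.symm = fun q => (gg b m (e.symm q))⁻¹ := funext fun q => (hd q).deriv
  rw [this]
  exact ((gg_cont hb hm).comp hc).inv₀ fun q => (gg_pos hb hm _).ne'

end

lemma phiSm_contDiff {l u : ℝ} (hlu : l < u) : ContDiff ℝ 1 (phiSm l u) := by
  rw [contDiff_one_iff_deriv]
  refine ⟨fun q => (phiSm_deriv hlu q).differentiableAt, ?_⟩
  have : deriv (phiSm l u) = phi1 l u := funext fun q => (phiSm_deriv hlu q).deriv
  rw [this]
  exact phi1_continuous l u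

lemma prim_contDiff {k : ℝ → ℝ} (hk : ContDiff ℝ 1 k) (a : ℝ) :
    (∀ x, HasDerivAt (fun x => ∫ r in a..x, k r) (k x) x) ∧
      ContDiff ℝ 2 (fun x => ∫ r in a..x, k r) := by
  have h : ∀ x, HasDerivAt (fun x => ∫ r in a..x, k r) (k x) x := fun x =>
    intervalIntegral.integral_hasDerivAt_right (hk.continuous.intervalIntegrable _ _)
      (hk.continuous.stronglyMeasurableAtFilter _ _) hk.continuous.continuousAt
  refine ⟨h, ?_⟩
  have := (contDiff_succ_iff_deriv (𝕜 := ℝ) (n := 1) (f := fun x => ∫ r in a..x, k r)).2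
    ⟨fun x => (h x).differentiableAt, by simp, ?_⟩
  · exact_mod_cast this
  · rw [funext fun x => (h x).deriv]; exact hk

lemma kk_contDiff {l u : ℝ} (hl : 0 < l) (hlu : l < u) :
    ContDiff ℝ 1 (fun r => phiSm l u r / r) := by
  rw [contDiff_iff_contDiffAt]
  intro r
  rcases lt_or_ge r l with h | h
  · refine (contDiffAt_const (c := (0:ℝ))).congr_of_eventuallyEq ?_
    filter_upwards [Iio_mem_nhds h] with y hy
    rw [phiSm_zero_left (le_of_lt hy), zero_div]
  · exact (phiSm_contDiff hlu).contDiffAt.div contDiffAt_id (by linarith)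

/-- Everything about the second function, in rescaled variables. -/
lemma G_main {b l u : ℝ} (hb : 0 < b) (hbl : b < l) (hlu : l < u) :
    ∃ G G1 G2 G11 : ℝ → ℝ → ℝ,
      ContDiffOn ℝ 2 (fun p : ℝ × ℝ => G p.1 p.2) (Iic (0 : ℝ) ×ˢ Ici (0 : ℝ)) ∧
      (∀ x1 ≤ (0 : ℝ), ∀ x2 : ℝ, 0 ≤ x2 →
        HasDerivAt (fun t => G t x2) (G1 x1 x2) x1 ∧
        HasDerivAt (fun t => G x1 t) (G2 x1 x2) x2 ∧
        HasDerivAt (fun t => G1 t x2) (G11 x1 x2) x1) ∧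
      (∀ x1 ≤ (0 : ℝ), ∀ x2 : ℝ, 0 ≤ x2 →
        (-x1 + x2 - b) * G1 x1 x2 - x2 * G2 x1 x2 = -phiSm l u x2) ∧
      (∀ x2 : ℝ, 0 ≤ x2 → G1 0 x2 = G2 0 x2) ∧
      (∀ x1 ≤ (0:ℝ), ∀ x2 : ℝ, 0 ≤ x2 → x2 ≤ u →
          G x1 x2 ≤ Real.log (u / l) + (u - l) / b) ∧
      (∀ x1 ≤ (0 : ℝ), ∀ x2 : ℝ, 0 ≤ x2 →
        |G1 x1 x2| ≤ 1 / b ∧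
        |G11 x1 x2| ≤ 1 / (b * (l - b)) * (1 + 4 * l / (u - l))) := by
  obtain ⟨m, hbm, hml⟩ := exists_between hbl
  obtain ⟨W, hW1, hW2, hWm, hWc, hWd⟩ := WW_exists hb hbm
  have hhm := hh_strictMono hb hbm
  set h := hh b m with hh_def
  -- the derivative of M
  set M1 : ℝ → ℝ := fun q => phiSm l u (W q) * W q / b with hM1
  set M2 : ℝ → ℝ := fun q =>
    (phi1 l u (W q) * W q + phiSm l u (W q)) / b * (gg b m (W q))⁻¹ with hM2
  have M1c : ContDiff ℝ 1 M1 := (((phiSm_contDiff hlu).comp hWc).mul hWc).div_const b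
  have M1d : ∀ q, HasDerivAt M1 (M2 q) q := fun q => by
    have := ((((phiSm_deriv hlu (W q)).comp q (hWd q))).mul (hWd q)).div_const b
    refine HasDerivAt.congr_deriv this ?_
    simp only [hM2, Function.comp_apply]; ring
  obtain ⟨Md, Mc⟩ := prim_contDiff M1c (h l)
  obtain ⟨Hd, Hc⟩ := prim_contDiff (kk_contDiff (hb.trans hbl) hlu) l
  set M : ℝ → ℝ := fun q => ∫ r in (h l)..q, M1 r with hM
  set H : ℝ → ℝ := fun x => ∫ r in l..x, phiSm l u r / r with hH
  have hWl : ∀ q, q ≤ h l → W q ≤ l := fun q hq => by rw [← hW1 l]; exact hWm hq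
  have M1z : ∀ q, q ≤ h l → M1 q = 0 := fun q hq => by
    simp only [hM1, phiSm_zero_left (hWl q hq)]; simp
  have M2z : ∀ q, q ≤ h l → M2 q = 0 := fun q hq => by
    simp only [hM2, phiSm_zero_left (hWl q hq), phi1_zero_left hlu (hWl q hq)]; simp
  have Mz : ∀ q, q ≤ h l → M q = 0 := fun q hq => by
    simp only [hM]
    refine (intervalIntegral.integral_congr (g := fun _ => (0:ℝ)) fun r hr => ?_).trans (by simp)
    rw [uIcc_of_ge hq] at hr
    exact M1z r hr.2
  have Hz : ∀ x, x ≤ l → H x = 0 := fun x hx => by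
    simp only [hH]
    refine (intervalIntegral.integral_congr (g := fun _ => (0:ℝ)) fun r hr => ?_).trans (by simp)
    rw [uIcc_of_ge hx] at hr
    simp [phiSm_zero_left hr.2]
  have M1nn : ∀ q, 0 ≤ M1 q := fun q => by
    rcases le_total q (h l) with hq | hq
    · rw [M1z q hq]
    · have : l ≤ W q := by rw [← hW1 l]; exact hWm hq
      exact div_nonneg (mul_nonneg (phiSm_bound hlu _).1 (by linarith)) hb.le
  set Q : ℝ → ℝ → ℝ := fun x1 x2 => (x1 + b) / x2 + Real.log x2 with hQ
  have Qle : ∀ x1 ≤ (0:ℝ), ∀ x2, m ≤ x2 → Q x1 x2 ≤ h x2 := fun x1 h1 x2 h2 => by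
    rw [hh_def, hh_eq hb hbm h2]
    simp only [hQ]
    have : 0 < x2 := by linarith
    gcongr
    linarith
  have Q0 : ∀ x2, m ≤ x2 → Q 0 x2 = h x2 := fun x2 h2 => by
    rw [hh_def, hh_eq hb hbm h2]; simp [hQ]
  have Qd1 : ∀ x1 x2, HasDerivAt (fun t => Q t x2) (1 / x2) x1 := fun x1 x2 =>
    (((hasDerivAt_id x1).add_const b).div_const x2).add_const _
  have Qd2 : ∀ x1 x2, x2 ≠ 0 → HasDerivAt (fun t => Q x1 t) ((x2 - x1 - b) / x2 ^ 2) x2 :=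
    fun x1 x2 hx => by
    have h1 := ((hasDerivAt_inv hx).const_mul (x1 + b)).add (Real.hasDerivAt_log hx)
    refine HasDerivAt.congr_deriv (h1.congr_of_eventuallyEq ?_) ?_
    · exact Eventually.of_forall fun x => by simp [hQ, div_eq_mul_inv]
    · field_simp; ring
  -- agreement of the two branches
  have Geq : ∀ x1 ≤ (0:ℝ), ∀ x2, m ≤ x2 →
      (if x2 ≤ l then 0 else H x2 + M (Q x1 x2)) = H x2 + M (Q x1 x2) := by
    intro x1 h1 x2 h2
    split_ifs with h3
    · rw [Hz x2 h3, Mz _ ((Qle x1 h1 x2 h2).trans (hhm.monotone h3)), add_zero]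
    · rfl
  have G2eq : ∀ x1 ≤ (0:ℝ), ∀ x2, m ≤ x2 →
      (if x2 ≤ l then 0 else phiSm l u x2 / x2 + M1 (Q x1 x2) * ((x2 - x1 - b) / x2 ^ 2))
        = phiSm l u x2 / x2 + M1 (Q x1 x2) * ((x2 - x1 - b) / x2 ^ 2) := by
    intro x1 h1 x2 h2
    split_ifs with h3
    · rw [phiSm_zero_left h3, M1z _ ((Qle x1 h1 x2 h2).trans (hhm.monotone h3))]; simp
    · rfl
  have hl0 : 0 < l := hb.trans hbl
  refine ⟨fun x1 x2 => if x2 ≤ l then 0 else H x2 + M (Q x1 x2),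
    fun x1 x2 => if x2 ≤ l then 0 else M1 (Q x1 x2) * (1 / x2),
    fun x1 x2 => if x2 ≤ l then 0 else phiSm l u x2 / x2 + M1 (Q x1 x2) * ((x2 - x1 - b) / x2 ^ 2),
    fun x1 x2 => if x2 ≤ l then 0 else M2 (Q x1 x2) * (1 / x2) * (1 / x2), ?_, ?_, ?_, ?_, ?_, ?_⟩
  · rintro ⟨x1, x2⟩ ⟨h1, h2⟩
    simp only [mem_Iic, mem_Ici] at h1 h2
    rcases lt_or_ge x2 l with h3 | h3
    · refine ContDiffAt.contDiffWithinAt ?_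
      refine (contDiffAt_const (c := (0:ℝ))).congr_of_eventuallyEq ?_
      have : ∀ᶠ p : ℝ × ℝ in 𝓝 (x1, x2), p.2 < l :=
        continuous_snd.continuousAt.eventually_lt continuousAt_const h3
      filter_upwards [this] with p hp
      rw [if_pos hp.le]
    · have h4 : x2 ≠ 0 := by linarith
      have c : ContDiffAt ℝ 2 (fun p : ℝ × ℝ => H p.2 + M (Q p.1 p.2)) (x1, x2) := by
        have cQ : ContDiffAt ℝ 2 (fun p : ℝ × ℝ => Q p.1 p.2) (x1, x2) :=
          ((contDiffAt_fst.add contDiffAt_const).div contDiffAt_snd h4).add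
            (contDiffAt_snd.log h4)
        exact (Hc.contDiffAt.comp (x1, x2) contDiffAt_snd).add (Mc.contDiffAt.comp (x1, x2) cQ)
      refine c.contDiffWithinAt.congr_of_eventuallyEq ?_ (Geq x1 h1 x2 (by linarith))
      have : ∀ᶠ p : ℝ × ℝ in 𝓝 (x1, x2), m < p.2 :=
        continuousAt_const.eventually_lt continuous_snd.continuousAt (by simp only; linarith)
      filter_upwards [self_mem_nhdsWithin, mem_nhdsWithin_of_mem_nhds this] with p hp hp2
      exact Geq p.1 hp.1 p.2 (le_of_lt hp2)
  · intro x1 h1 x2 h2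
    refine ⟨?_, ?_, ?_⟩
    · by_cases h3 : x2 ≤ l
      · simp only [if_pos h3]; exact hasDerivAt_const _ _
      · simp only [if_neg h3]
        exact ((Md _).comp x1 (Qd1 x1 x2)).const_add _
    · rcases lt_or_ge x2 l with h3 | h3
      · simp only [if_pos h3.le]
        refine (hasDerivAt_const x2 (0:ℝ)).congr_of_eventuallyEq ?_
        filter_upwards [Iio_mem_nhds h3] with y hy
        rw [if_pos (le_of_lt hy)]
      · simp only
        rw [G2eq x1 h1 x2 (by linarith)]
        have := (Hd x2).add ((Md _).comp x2 (Qd2 x1 x2 (by linarith)))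
        refine this.congr_of_eventuallyEq ?_
        filter_upwards [Ioi_mem_nhds (by linarith : m < x2)] with y hy
        exact Geq x1 h1 y (le_of_lt hy)
    · by_cases h3 : x2 ≤ l
      · simp only [if_pos h3]; exact hasDerivAt_const _ _
      · simp only [if_neg h3]
        exact ((M1d _).comp x1 (Qd1 x1 x2)).mul_const _
  · intro x1 h1 x2 h2
    by_cases h3 : x2 ≤ l
    · simp only [if_pos h3, phiSm_zero_left h3]; simp
    · simp only [if_neg h3]
      have : x2 ≠ 0 := by linarith
      field_simp
      ring
  · intro x2 h2
    by_cases h3 : x2 ≤ l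
    · simp only [if_pos h3]
    · simp only [if_neg h3]
      have : x2 ≠ 0 := by linarith
      rw [Q0 x2 (by linarith)]
      simp only [hM1, hW1]
      field_simp
      ring
  · intro x1 h1 x2 h2 h2u
    simp only
    have hlog : 0 ≤ Real.log (u / l) := Real.log_nonneg (by rw [le_div_iff₀ hl0]; linarith)
    have hub : 0 ≤ (u - l) / b := div_nonneg (by linarith) hb.le
    split_ifs with h3
    · linarith
    push Not at h3
    refine add_le_add ?_ ?_
    · have hk := (kk_contDiff hl0 hlu).continuous
      calc H x2 ≤ ∫ r in l..x2, r⁻¹ := by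
            refine intervalIntegral.integral_mono_on h3.le (hk.intervalIntegrable _ _) ?_ ?_
            · refine intervalIntegral.intervalIntegrable_inv (fun r hr => ?_) continuousOn_id
              rw [uIcc_of_le h3.le] at hr
              linarith [hr.1]
            · intro r hr
              have : 0 < r := by linarith [hr.1]
              rw [← one_div]
              gcongr
              exact (phiSm_bound hlu r).2
        _ = Real.log (x2 / l) := integral_inv_of_pos hl0 (by linarith)
        _ ≤ Real.log (u / l) := by
            apply Real.log_le_log (div_pos (by linarith) hl0)
            gcongr
    · have mono : Monotone M := monotone_of_hasDerivAt_nonneg Md M1nn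
      have h5 := norm_image_sub_le_of_norm_deriv_le_segment' (f := fun y => M (h y))
        (f' := fun y => M1 (h y) * gg b m y) (C := 1 / b) (a := l) (b := x2)
        (fun y hy => ((Md (h y)).comp y (hh_deriv hb hbm y)).hasDerivWithinAt)
        (fun y hy => by
          have hy0 : 0 < y := by linarith [hy.1]
          have : M1 (h y) * gg b m y = phiSm l u y * ((y - b) / (b * y)) := by
            simp only [hM1, hW1, gg]
            rw [max_eq_left (by linarith [hy.1])]
            field_simp
          rw [this, Real.norm_eq_abs, abs_of_nonneg (mul_nonneg (phiSm_bound hlu y).1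
            (div_nonneg (by linarith [hy.1]) (by positivity)))]
          calc _ ≤ 1 * (y / (b * y)) := by
                refine mul_le_mul (phiSm_bound hlu y).2 ?_
                  (div_nonneg (by linarith [hy.1]) (by positivity)) zero_le_one
                gcongr; linarith
            _ = 1 / b := by field_simp) x2 ⟨h3.le, le_rfl⟩
      rw [Mz (h l) le_rfl, sub_zero] at h5
      calc M (Q x1 x2) ≤ M (h x2) := mono (Qle x1 h1 x2 (by linarith))
        _ ≤ 1 / b * (x2 - l) := (le_abs_self _).trans h5
        _ ≤ 1 / b * (u - l) := by gcongr
        _ = (u - l) / b := by ring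
  · intro x1 h1 x2 h2
    have hrhs : 0 ≤ 1 / (b * (l - b)) * (1 + 4 * l / (u - l)) := by
      have : 0 < l - b := by linarith
      have : 0 < u - l := by linarith
      positivity
    simp only
    split_ifs with h3
    · simp only [abs_zero]
      exact ⟨by positivity, hrhs⟩
    push Not at h3
    rcases le_total (Q x1 x2) (h l) with h4 | h4
    · rw [M1z _ h4, M2z _ h4]
      simp only [zero_mul, abs_zero]
      exact ⟨by positivity, hrhs⟩
    have hx0 : 0 < x2 := by linarith
    have w1 : l ≤ W (Q x1 x2) := by rw [← hW1 l]; exact hWm h4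
    have w2 : W (Q x1 x2) ≤ x2 := by
      have := hWm (Qle x1 h1 x2 (by linarith))
      rwa [hW1 x2] at this
    simp only [hM1, hM2]
    generalize W (Q x1 x2) = w at w1 w2
    have hw0 : 0 < w := by linarith
    have hwb : 0 < w - b := by linarith
    have hlb : 0 < l - b := by linarith
    have hul : 0 < u - l := by linarith
    obtain ⟨p0, p1⟩ := phiSm_bound hlu w
    obtain ⟨d0, d1⟩ := phi1_bound hlu w
    constructor
    · rw [abs_of_nonneg (by positivity)]
      calc _ ≤ 1 * x2 / b * (1 / x2) := by gcongr
        _ = 1 / b := by field_simp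
    · rw [gg, max_eq_left (by linarith), abs_of_nonneg (by positivity)]
      have e1 : w / (w - b) ≤ l / (l - b) := by
        rw [div_le_div_iff₀ hwb hlb]; nlinarith
      calc (phi1 l u w * w + phiSm l u w) / b * ((w - b) / w ^ 2)⁻¹ * (1 / x2) * (1 / x2)
          = (phi1 l u w * (w / (w - b)) + phiSm l u w * (1 / (w - b))) / b * (w / x2) ^ 2 := by
            field_simp
        _ ≤ (4 / (u - l) * (l / (l - b)) + 1 * (1 / (l - b))) / b * 1 ^ 2 := by
            gcongr
            rw [div_le_one hx0]; exact w2
        _ = _ := by field_simp; ring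

end

/-- Lemma `expergodderivs`.  Fix `n ≥ 1`, `β > 0` and `β < κ₁ < κ₂`.
There exist functions `f⁽¹⁾, f⁽²⁾ ∈ C²(Ω)` — below `F, G`, with first-order (one-sided)
partial derivatives `F1, F2, G1, G2` and second-order derivatives in `x₁` `F11, G11` —
such that (i) `F` solves the PDE with right-hand side `-φ^{(κ₁/√n,κ₂/√n)}(-x₁)` together
with the oblique boundary condition, (ii) `G` solves the PDE with right-hand side
`-φ^{(κ₁/√n,κ₂/√n)}(x₂)` together with the boundary condition, (iii) the bounds on `F`
and `G` hold on `[-κ₂/√n, 0] × [0, κ₂/√n]`, and (iv) the stated derivative bounds hold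
on all of `Ω`. -/
theorem stmt16 (n : ℕ) (hn : 1 ≤ n) (β κ1 κ2 : ℝ) (hβ : 0 < β)
    (hκ1 : β < κ1) (hκ12 : κ1 < κ2) :
    ∃ F F1 F2 F11 G G1 G2 G11 : ℝ → ℝ → ℝ,
      -- F, G ∈ C²(Ω)
      ContDiffOn ℝ 2 (fun p : ℝ × ℝ => F p.1 p.2)
        (Set.Iic (0 : ℝ) ×ˢ Set.Ici (0 : ℝ)) ∧
      ContDiffOn ℝ 2 (fun p : ℝ × ℝ => G p.1 p.2)
        (Set.Iic (0 : ℝ) ×ˢ Set.Ici (0 : ℝ)) ∧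
      -- F1, F2, G1, G2 are the first-order (one-sided) partial derivatives,
      -- and F11, G11 the second-order (one-sided) derivatives in x₁
      (∀ x1 ≤ (0 : ℝ), ∀ x2 : ℝ, 0 ≤ x2 →
        HasDerivWithinAt (fun t => F t x2) (F1 x1 x2) (Set.Iic 0) x1 ∧
        HasDerivWithinAt (fun t => F x1 t) (F2 x1 x2) (Set.Ici 0) x2 ∧
        HasDerivWithinAt (fun t => F1 t x2) (F11 x1 x2) (Set.Iic 0) x1 ∧
        HasDerivWithinAt (fun t => G t x2) (G1 x1 x2) (Set.Iic 0) x1 ∧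
        HasDerivWithinAt (fun t => G x1 t) (G2 x1 x2) (Set.Ici 0) x2 ∧
        HasDerivWithinAt (fun t => G1 t x2) (G11 x1 x2) (Set.Iic 0) x1) ∧
      -- (i) the PDE for f⁽¹⁾ and its boundary condition
      (∀ x1 ≤ (0 : ℝ), ∀ x2 : ℝ, 0 ≤ x2 →
        (-x1 + x2 - β / Real.sqrt n) * F1 x1 x2 - x2 * F2 x1 x2 =
          -phiSm (κ1 / Real.sqrt n) (κ2 / Real.sqrt n) (-x1)) ∧
      (∀ x2 : ℝ, 0 ≤ x2 → F1 0 x2 = F2 0 x2) ∧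
      -- (ii) the PDE for f⁽²⁾ and its boundary condition
      (∀ x1 ≤ (0 : ℝ), ∀ x2 : ℝ, 0 ≤ x2 →
        (-x1 + x2 - β / Real.sqrt n) * G1 x1 x2 - x2 * G2 x1 x2 =
          -phiSm (κ1 / Real.sqrt n) (κ2 / Real.sqrt n) x2) ∧
      (∀ x2 : ℝ, 0 ≤ x2 → G1 0 x2 = G2 0 x2) ∧
      -- (iii) bounds on F and G on [-κ₂/√n, 0] × [0, κ₂/√n]
      (∀ x1 : ℝ, -(κ2 / Real.sqrt n) ≤ x1 → x1 ≤ 0 →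
        ∀ x2 : ℝ, 0 ≤ x2 → x2 ≤ κ2 / Real.sqrt n →
          F x1 x2 ≤ Real.log ((κ2 - β) / (κ1 - β)) ∧
          G x1 x2 ≤ Real.log (κ2 / κ1) + (κ2 - κ1) / β) ∧
      -- (iv) derivative bounds on Ω
      (∀ x1 ≤ (0 : ℝ), ∀ x2 : ℝ, 0 ≤ x2 →
        |F1 x1 x2| ≤ 4 * Real.sqrt n / (κ2 - κ1) *
          Real.log ((κ2 - β) / (κ1 - β)) ∧
        |F11 x1 x2| ≤ 12 * n / (κ2 - κ1) ^ 2 *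
          Real.log ((κ2 - β) / (κ1 - β)) ∧
        |G1 x1 x2| ≤ Real.sqrt n / β ∧
        |G11 x1 x2| ≤ n / (β * (κ1 - β)) *
          (1 + κ1 / (κ1 - β) * (4 * (κ1 - β) / (κ2 - κ1)))) := by
  have hs : 0 < Real.sqrt n := Real.sqrt_pos.2 (by exact_mod_cast hn)
  have hsq : (n : ℝ) = Real.sqrt n ^ 2 := (Real.sq_sqrt (Nat.cast_nonneg n)).symm
  rw [hsq]
  rw [Real.sqrt_sq hs.le]
  generalize Real.sqrt n = s at hs
  have hb : 0 < β / s := div_pos hβ hs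
  have hbl : β / s < κ1 / s := by gcongr
  have hlu : κ1 / s < κ2 / s := by gcongr
  obtain ⟨G, G1, G2, G11, hGc, hGd, hGp, hGb, hGu, hGe⟩ := G_main hb hbl hlu
  have d1 : 0 < κ1 - β := by linarith
  have d2 : 0 < κ2 - κ1 := by linarith
  have eL : (κ2 / s - β / s) / (κ1 / s - β / s) = (κ2 - β) / (κ1 - β) := by
    rw [← sub_div, ← sub_div]; field_simp
  have eM : (κ2 / s) / (κ1 / s) = κ2 / κ1 := by field_simp
  have eN : (κ2 / s - κ1 / s) / (β / s) = (κ2 - κ1) / β := by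
    rw [← sub_div]; field_simp
  refine ⟨fun x1 x2 => JJ (β / s) (phiSm (κ1 / s) (κ2 / s)) 0 0 (x1, x2),
    fun x1 x2 => -JJ (β / s) (phi1 (κ1 / s) (κ2 / s)) 0 1 (x1, x2),
    fun x1 x2 => -JJ (β / s) (phi1 (κ1 / s) (κ2 / s)) 1 1 (x1, x2),
    fun x1 x2 => JJ (β / s) (phi2 (κ1 / s) (κ2 / s)) 0 2 (x1, x2),
    G, G1, G2, G11, (F_contDiff hbl hlu).contDiffOn, hGc, ?_, ?_, ?_, hGp, hGb, ?_, ?_⟩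
  · intro x1 h1 x2 h2
    obtain ⟨g1, g2, g3⟩ := hGd x1 h1 x2 h2
    exact ⟨(F_dx1 hbl hlu x1 x2).hasDerivWithinAt, (F_dx2 hbl hlu x1 x2).hasDerivWithinAt,
      (F1_dx1 hbl hlu x1 x2).hasDerivWithinAt, g1.hasDerivWithinAt, g2.hasDerivWithinAt,
      g3.hasDerivWithinAt⟩
  · intro x1 h1 x2 h2
    exact F_pde hbl hlu (x1, x2)
  · intro x2 h2
    simp only
    rw [F1_bdry hbl hlu 0 hb x2 h2, F1_bdry hbl hlu 1 hb x2 h2]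
  · intro x1 h1 h1' x2 h2 h2'
    refine ⟨?_, ?_⟩
    · rw [← eL]; exact F_ub hbl hlu (x1, x2) h2 h1
    · rw [← eM, ← eN]; exact hGu x1 h1' x2 h2 h2'
  · intro x1 h1 x2 h2
    obtain ⟨g1, g2⟩ := hGe x1 h1 x2 h2
    refine ⟨?_, ?_, ?_, ?_⟩
    · have := F1_ub hbl hlu (x1, x2) h2
      rw [eL] at this
      rw [abs_neg]
      refine this.trans (le_of_eq ?_)
      congr 1
      rw [← sub_div]; field_simp
    · have := F11_ub hbl hlu (x1, x2) h2
      rw [eL] at this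
      refine this.trans (le_of_eq ?_)
      congr 1
      rw [← sub_div]; field_simp
    · refine g1.trans (le_of_eq ?_)
      field_simp
    · refine g2.trans (le_of_eq ?_)
      rw [← sub_div, ← sub_div]
      field_simp
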